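/- For integers j, k ≥ 0, 0 ≤ t ≤ n, and signs ε₁, ε₂ ∈ {+1,−1}: m(0_j ⊥ U_k^{ε₂}, 0_t ⊥ U_{n−t}^{ε₁}) = Σ_{ℓ=0}^{min(t,j)} binom(t,ℓ)_q · q^{(t−ℓ)(j+k−ℓ)} · m(0_{j−ℓ} ⊥ U_k^{ε₂}, U_{n−t}^{ε₁}). -/

import Mathlib

/-!
Let `R = 0_t` be the radical of `V = 0_t ⊥ U_{n-t}` and `π : V → U = U_{n-t}` the projection
with kernel `R`. The form on `V` is pulled back from `U`, so a subspace `W` of `V` with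
`dim (W ∩ R) = ℓ` is isometric to `0_j ⊥ U_k^ε` exactly when `ℓ ≤ j` and `π W` is isometric to
`0_{j-ℓ} ⊥ U_k^ε` (`hasType_iff_map`): the nondegenerate part of `W` maps isometrically to `U`,
and `W ∩ R` lies inside the radical of `W`.

It remains to count the `W` with `dim (W ∩ R) = ℓ` and `π W` in a given family of subspaces of `U`.
There are `binom(t, ℓ)_q` choices of `L = W ∩ R` (`card_grass`, by counting linearly independent
families according to their span). For fixed `L` and `W' = π W`, the subspaces `W` correspond
bijectively to the linear maps `W' → R ⧸ L`, through their graphs (`graphSub`), so there are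
`q ^ ((t - ℓ) * dim W')` of them (`card_fiber`), where `dim W' = j - ℓ + k`. Summing over `ℓ`
gives the formula.
-/


open Matrix

noncomputable section

open scoped Classical

/-- The sign `χ((−1)^{n(n−1)/2}·det A)` of a Gram matrix `A` over a field:
`1` if the argument is a (nonzero) square, `−1` otherwise. -/
def gramSign {F : Type} [Field F] {n : ℕ} (A : Matrix (Fin n) (Fin n) F) : ℤ :=
  if IsSquare ((-1 : F) ^ (n * (n - 1) / 2) * A.det) then 1 else -1

/-- `A` is a Gram matrix of a nondegenerate quadratic space of dimension `n` and
sign `ε` over `F`, i.e. a Gram matrix of `U_n^ε`. -/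
def IsGram (F : Type) [Field F] (n : ℕ) (ε : ℤ) (A : Matrix (Fin n) (Fin n) F) : Prop :=
  A.IsSymm ∧ A.det ≠ 0 ∧ gramSign A = ε

/-- Gram matrix of the orthogonal sum `0_j ⊥ (space with Gram matrix A)`. -/
def padGram {F : Type} [Field F] {k : ℕ} (j : ℕ) (A : Matrix (Fin k) (Fin k) F) :
    Matrix (Fin j ⊕ Fin k) (Fin j ⊕ Fin k) F :=
  Matrix.fromBlocks 0 0 0 A

/-- `φ` is an isometric embedding of the quadratic space with Gram matrix `A` into the
quadratic space with Gram matrix `B` (an injective linear map preserving the forms). -/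
def IsIsomEmb {F : Type} [Field F] {ι κ : Type} [Fintype ι] [Fintype κ]
    (A : Matrix ι ι F) (B : Matrix κ κ F) (φ : (ι → F) →ₗ[F] (κ → F)) : Prop :=
  Function.Injective φ ∧ ∀ x y : ι → F, φ x ⬝ᵥ B.mulVec (φ y) = x ⬝ᵥ A.mulVec y

/-- `|O(U,V)|` : the number of isometric embeddings of the quadratic space with Gram
matrix `A` into the quadratic space with Gram matrix `B`. -/
def embCount {F : Type} [Field F] {ι κ : Type} [Fintype ι] [Fintype κ]
    (A : Matrix ι ι F) (B : Matrix κ κ F) : ℕ :=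
  Nat.card {φ : (ι → F) →ₗ[F] (κ → F) // IsIsomEmb A B φ}

/-- `m(0_j ⊥ U_k^{ε₂}, ·)` : the number of subspaces of the quadratic space with Gram
matrix `B` which (with the restricted form) are isometric to `0_j ⊥ U_k^{ε₂}`. -/
def subCount {F : Type} [Field F] {κ : Type} [Fintype κ]
    (B : Matrix κ κ F) (j k : ℕ) (ε₂ : ℤ) : ℕ :=
  Nat.card {W : Submodule F (κ → F) //
    ∃ A : Matrix (Fin k) (Fin k) F, IsGram F k ε₂ A ∧
      ∃ φ : ((Fin j ⊕ Fin k) → F) →ₗ[F] (κ → F),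
        IsIsomEmb (padGram j A) B φ ∧ LinearMap.range φ = W}

/-- The Gaussian binomial coefficient `binom(n,i)_q = ∏_{ℓ=0}^{i−1} (q^{n−ℓ}−1)/(q^{i−ℓ}−1)`
(which vanishes when `i > n`). -/
def qbinom (q : ℚ) (n i : ℕ) : ℚ :=
  ∏ ℓ ∈ Finset.range i, (q ^ (n - ℓ) - 1) / (q ^ (i - ℓ) - 1)

/-! ### Gaussian binomials -/

section Grassmann

variable {F : Type} [Field F] [Fintype F] {M : Type} [AddCommGroup M] [Module F M]

theorem card_sigma_const {α : Type} {β : α → Type} [Finite α] [∀ a, Finite (β a)] (c : ℕ)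
    (h : ∀ a, Nat.card (β a) = c) : Nat.card (Sigma β) = Nat.card α * c := by
  have := Fintype.ofFinite α
  rw [Nat.card_sigma]
  simp [h]

/-- Sorting linearly independent families by their span: every `ℓ`-dimensional subspace is
spanned by equally many families of length `ℓ`. -/
theorem card_grass_mul [Finite M] (ℓ : ℕ) (hℓ : ℓ ≤ Module.finrank F M) :
    Nat.card {L : Submodule F M // Module.finrank F L = ℓ} *
        ∏ i : Fin ℓ, (Fintype.card F ^ ℓ - Fintype.card F ^ (i : ℕ)) =
      ∏ i : Fin ℓ, (Fintype.card F ^ Module.finrank F M - Fintype.card F ^ (i : ℕ)) := by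
  rw [← card_linearIndependent hℓ]
  rw [← card_sigma_const
    (β := fun L : {L : Submodule F M // Module.finrank F L = ℓ} =>
      {s : Fin ℓ → L.1 // LinearIndependent F s})]
  · refine Nat.card_congr (Equiv.ofBijective
      (fun x => ⟨fun i => (x.2.1 i : M), x.2.2.map' x.1.1.subtype (by simp)⟩) ⟨?_, ?_⟩)
    · rintro ⟨⟨L, hL⟩, s, hs⟩ ⟨⟨L', hL'⟩, s', hs'⟩ h
      have key : ∀ (L : Submodule F M) (_ : Module.finrank F L = ℓ) (s : Fin ℓ → L)
          (_ : LinearIndependent F s), Submodule.span F (Set.range fun i => (s i : M)) = L := by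
        intro L hL s hs
        apply Submodule.eq_of_le_of_finrank_eq
        · rw [Submodule.span_le]
          rintro _ ⟨i, rfl⟩
          exact (s i).2
        · have hs' : LinearIndependent F fun i => (s i : M) := hs.map' L.subtype (by simp)
          rw [hL, finrank_span_eq_card hs', Fintype.card_fin]
      have hv : (fun i => (s i : M)) = fun i => (s' i : M) := congrArg Subtype.val h
      have : L = L' := by rw [← key L hL s hs, ← key L' hL' s' hs', hv]
      subst this
      have : s = s' := by
        funext i
        exact Subtype.ext (congrFun hv i)
      subst this
      rfl
    · rintro ⟨s, hs⟩
      refine ⟨⟨⟨Submodule.span F (Set.range s), ?_⟩, fun i => ⟨s i, Submodule.subset_span ⟨i, rfl⟩⟩,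
        ?_⟩, rfl⟩
      · rw [finrank_span_eq_card hs, Fintype.card_fin]
      · exact linearIndependent_span hs
  · rintro ⟨L, hL⟩
    have := card_linearIndependent (K := F) (V := L) (k := ℓ) hL.ge
    simp only [this, hL]

theorem card_grass [Finite M] (ℓ : ℕ) (hℓ : ℓ ≤ Module.finrank F M) :
    (Nat.card {L : Submodule F M // Module.finrank F L = ℓ} : ℚ) =
      qbinom (Fintype.card F : ℚ) (Module.finrank F M) ℓ := by
  have h := congrArg (Nat.cast : ℕ → ℚ) (card_grass_mul (F := F) (M := M) ℓ hℓ)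
  have hq : 1 < Fintype.card F := Fintype.one_lt_card
  have hq' : (1 : ℚ) < Fintype.card F := by exact_mod_cast hq
  set q := Fintype.card F
  have key : ∀ N, ℓ ≤ N → ((∏ i : Fin ℓ, (q ^ N - q ^ (i : ℕ)) : ℕ) : ℚ) =
      (∏ i ∈ Finset.range ℓ, (q : ℚ) ^ i) * ∏ i ∈ Finset.range ℓ, ((q : ℚ) ^ (N - i) - 1) := by
    intro N hN
    rw [Fin.prod_univ_eq_prod_range (fun i => q ^ N - q ^ i) ℓ, Nat.cast_prod,
      ← Finset.prod_mul_distrib]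
    refine Finset.prod_congr rfl fun i hi => ?_
    have hi : i ≤ N := by have := Finset.mem_range.1 hi; omega
    rw [Nat.cast_sub (Nat.pow_le_pow_right hq.le hi)]
    push_cast
    rw [mul_sub, ← pow_add, mul_one]
    congr 2
    omega
  rw [Nat.cast_mul, key _ le_rfl, key _ hℓ] at h
  have h1 : (∏ i ∈ Finset.range ℓ, (q : ℚ) ^ i) ≠ 0 :=
    Finset.prod_ne_zero_iff.2 fun i _ => pow_ne_zero _ (by positivity)
  have h2 : (∏ i ∈ Finset.range ℓ, ((q : ℚ) ^ (ℓ - i) - 1)) ≠ 0 :=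
    Finset.prod_ne_zero_iff.2 fun i hi => by
      have hi := Finset.mem_range.1 hi
      have := one_lt_pow₀ hq' (n := ℓ - i) (by omega)
      exact (sub_pos.2 this).ne'
  rw [qbinom, Finset.prod_div_distrib, eq_div_iff h2]
  apply mul_left_cancel₀ h1
  rw [← h]
  ring

end Grassmann

/-! ### Subspaces with prescribed radical part and projection -/

section Graph

variable {F : Type} [Field F] {V R U : Type} [AddCommGroup V] [Module F V]
  [AddCommGroup R] [Module F R] [AddCommGroup U] [Module F U]

/-- For `V` identified with `R × U` through the linear maps `p` and `π`: the subspace of `V`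
that is the preimage, in the part of `V` lying over `W`, of the graph of `g : W → R ⧸ L`. -/
def graphSub (p : V →ₗ[F] R) (π : V →ₗ[F] U) (L : Submodule F R) (W : Submodule F U)
    (g : W →ₗ[F] R ⧸ L) : Submodule F V where
  carrier := {v | ∃ h : π v ∈ W, L.mkQ (p v) = g ⟨π v, h⟩}
  add_mem' := by
    rintro a b ⟨ha, ha'⟩ ⟨hb, hb'⟩
    refine ⟨by rw [map_add]; exact W.add_mem ha hb, ?_⟩
    rw [map_add, map_add, ha', hb', ← map_add]
    congr 1
    exact Subtype.ext (map_add π a b).symm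
  zero_mem' := by
    refine ⟨by simp, ?_⟩
    rw [map_zero, map_zero, ← map_zero g]
    congr 1
    exact Subtype.ext (map_zero π).symm
  smul_mem' := by
    rintro c a ⟨ha, ha'⟩
    refine ⟨by rw [map_smul]; exact W.smul_mem c ha, ?_⟩
    rw [map_smul, map_smul, ha', ← map_smul]
    congr 1
    exact Subtype.ext (map_smul π c a).symm

variable {p : V →ₗ[F] R} {π : V →ₗ[F] U}

theorem mem_graphSub {L : Submodule F R} {W : Submodule F U} {g : W →ₗ[F] R ⧸ L} {v : V} :
    v ∈ graphSub p π L W g ↔ ∃ h : π v ∈ W, L.mkQ (p v) = g ⟨π v, h⟩ := Iff.rfl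

theorem graphSub_map (hs : ∀ r u, ∃ v, p v = r ∧ π v = u) (L : Submodule F R)
    (W : Submodule F U) (g : W →ₗ[F] R ⧸ L) : (graphSub p π L W g).map π = W := by
  ext u
  constructor
  · rintro ⟨v, ⟨h, -⟩, rfl⟩
    exact h
  · intro hu
    obtain ⟨r, hr⟩ := L.mkQ_surjective (g ⟨u, hu⟩)
    obtain ⟨v, rfl, rfl⟩ := hs r u
    exact ⟨v, ⟨hu, hr⟩, rfl⟩

theorem graphSub_inf (hs : ∀ r u, ∃ v, p v = r ∧ π v = u) (L : Submodule F R)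
    (W : Submodule F U) (g : W →ₗ[F] R ⧸ L) :
    (graphSub p π L W g ⊓ LinearMap.ker π).map p = L := by
  have hz : ∀ v (hv : π v = 0) (h : π v ∈ W), g ⟨π v, h⟩ = 0 := by
    intro v hv h
    rw [← map_zero g]
    congr 1
    exact Subtype.ext hv
  ext r
  constructor
  · rintro ⟨v, ⟨⟨h, h'⟩, hv⟩, rfl⟩
    rw [hz v hv h] at h'
    simpa using h'
  · intro hr
    obtain ⟨v, rfl, hv⟩ := hs r 0
    have hW : π v ∈ W := by rw [hv]; exact W.zero_mem
    exact ⟨v, ⟨⟨hW, by rw [hz v hv hW]; simpa using hr⟩, hv⟩, rfl⟩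

/-- `p` is injective on `ker π`, so it preserves the dimension of `W ∩ ker π`. -/
theorem finrank_map_p (hi : ∀ v, p v = 0 → π v = 0 → v = 0) (W : Submodule F V) :
    Module.finrank F ((W ⊓ LinearMap.ker π).map p) = Module.finrank F ↥(W ⊓ LinearMap.ker π) := by
  rw [← LinearMap.range_domRestrict]
  apply LinearMap.finrank_range_of_inj
  rw [← LinearMap.ker_eq_bot, LinearMap.ker_eq_bot']
  rintro ⟨v, hv⟩ h
  exact Subtype.ext (hi v h hv.2)

/-- A subspace `W` is determined by `L = p (W ∩ ker π)`, by `π W`, and by a linear map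
`π W → R ⧸ L`; all such triples occur. -/
theorem card_fiber [Fintype F] [Finite V] [Finite R] [Finite U]
    (hi : ∀ v, p v = 0 → π v = 0 → v = 0)
    (hs : ∀ r u, ∃ v, p v = r ∧ π v = u) (T : Submodule F U → Prop) (ℓ d : ℕ)
    (hT : ∀ W, T W → Module.finrank F W = d) :
    Nat.card {W : Submodule F V //
        Module.finrank F ↥(W ⊓ LinearMap.ker π) = ℓ ∧ T (W.map π)} =
      Nat.card {L : Submodule F R // Module.finrank F L = ℓ} * Nat.card {W : Submodule F U // T W}
        * Fintype.card F ^ (d * (Module.finrank F R - ℓ)) := by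
  rw [← Nat.card_prod]
  have hfin : ∀ (L : Submodule F R) (W : Submodule F U), Finite (W →ₗ[F] R ⧸ L) :=
    fun L W => Module.finite_of_finite F
  rw [← card_sigma_const
    (β := fun x : {L : Submodule F R // Module.finrank F L = ℓ} × {W : Submodule F U // T W} =>
      (x.2.1 →ₗ[F] R ⧸ x.1.1))]
  · refine (Nat.card_congr (Equiv.ofBijective
      (fun x => ⟨graphSub p π x.1.1.1 x.1.2.1 x.2,
        by rw [← finrank_map_p hi, graphSub_inf hs]; exact x.1.1.2,
        by rw [graphSub_map hs]; exact x.1.2.2⟩) ⟨?_, ?_⟩)).symm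
    · rintro ⟨⟨⟨L, hL⟩, W, hW⟩, g⟩ ⟨⟨⟨L', hL'⟩, W', hW'⟩, g'⟩ h
      have hG : graphSub p π L W g = graphSub p π L' W' g' := congrArg Subtype.val h
      have h1 : L = L' := by rw [← graphSub_inf hs L W g, hG, graphSub_inf hs]
      have h2 : W = W' := by rw [← graphSub_map hs L W g, hG, graphSub_map hs]
      subst h1 h2
      have h3 : g = g' := by
        ext1 ⟨u, hu⟩
        obtain ⟨r, hr⟩ := L.mkQ_surjective (g ⟨u, hu⟩)
        obtain ⟨v, rfl, rfl⟩ := hs r u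
        have hv : v ∈ graphSub p π L W g := ⟨hu, hr⟩
        rw [hG] at hv
        obtain ⟨_, hv⟩ := hv
        rw [← hr, hv]
      subst h3
      rfl
    · rintro ⟨W, hW, hTW⟩
      -- `g` is the first component of a linear section of `W → π W`, taken modulo `L`.
      obtain ⟨s, hs'⟩ := LinearMap.exists_rightInverse_of_surjective (π.submoduleMap W)
        (LinearMap.range_eq_top.2 (π.submoduleMap_surjective W))
      have hsv : ∀ u : W.map π, π (s u : V) = u := fun u =>
        congrArg Subtype.val (LinearMap.congr_fun hs' u)
      refine ⟨⟨⟨⟨(W ⊓ LinearMap.ker π).map p, by rw [finrank_map_p hi, hW]⟩, W.map π, hTW⟩,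
        Submodule.mkQ _ ∘ₗ p ∘ₗ W.subtype ∘ₗ s⟩, Subtype.ext ?_⟩
      ext v
      simp only [mem_graphSub, LinearMap.comp_apply, Submodule.subtype_apply]
      constructor
      · rintro ⟨h, h'⟩
        rw [← sub_eq_zero, ← map_sub, ← map_sub, Submodule.mkQ_apply,
          Submodule.Quotient.mk_eq_zero] at h'
        obtain ⟨w, ⟨hw, hw'⟩, hpw⟩ := h'
        have := hi (w - (v - s ⟨π v, h⟩)) (by rw [map_sub, hpw, sub_self])
          (by rw [map_sub, map_sub, hsv, LinearMap.mem_ker.1 hw']; simp)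
        have hv : v = w + s ⟨π v, h⟩ := by
          rw [sub_eq_zero.1 this]; abel
        rw [hv]
        exact W.add_mem hw (s _).2
      · intro hv
        refine ⟨Submodule.mem_map_of_mem hv, ?_⟩
        rw [← sub_eq_zero, ← map_sub, ← map_sub, Submodule.mkQ_apply,
          Submodule.Quotient.mk_eq_zero]
        refine ⟨_, ⟨W.sub_mem hv (s _).2, ?_⟩, rfl⟩
        rw [SetLike.mem_coe, LinearMap.mem_ker, map_sub, hsv, sub_self]
  · rintro ⟨⟨L, hL⟩, W, hW⟩
    have := hfin L W
    have h := Submodule.finrank_quotient_add_finrank L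
    rw [Module.natCard_eq_pow_finrank (K := F), Nat.card_eq_fintype_card,
      Module.finrank_linearMap]
    congr 2
    · exact hT W hW
    · simp only
      omega

end Graph

/-! ### Isometry types of subspaces -/

section Types

variable {F : Type} [Field F] {V U : Type} [AddCommGroup V] [Module F V]
  [AddCommGroup U] [Module F U] {k : ℕ}

/-- Coordinate-free form of "`W` is isometric to `0_j ⊥ (space with Gram matrix A)`": `W` is the
sum of a `j`-dimensional subspace `D` orthogonal to `W` and the image of a map `f` pulling the
form `b` back to the one given by `A`. For nondegenerate `A` the sum is automatically direct and
`f` injective. -/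
def HasType (b : LinearMap.BilinForm F V) (A : Matrix (Fin k) (Fin k) F) (j : ℕ)
    (W : Submodule F V) : Prop :=
  ∃ (f : (Fin k → F) →ₗ[F] V) (D : Submodule F V),
    (∀ x y, b (f x) (f y) = x ⬝ᵥ A.mulVec y) ∧ Module.finrank F D = j ∧
    (∀ d ∈ D, ∀ w ∈ W, b d w = 0 ∧ b w d = 0) ∧ D ⊔ LinearMap.range f = W

theorem eq_zero_of_dot {A : Matrix (Fin k) (Fin k) F} (hA : A.det ≠ 0) {x : Fin k → F}
    (h : ∀ y, x ⬝ᵥ A.mulVec y = 0) : x = 0 := by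
  apply Matrix.eq_zero_of_vecMul_eq_zero hA
  apply dotProduct_eq_zero
  intro y
  rw [← Matrix.dotProduct_mulVec]
  exact h y

theorem HasType.finrank_eq [FiniteDimensional F V] {b : LinearMap.BilinForm F V}
    {A : Matrix (Fin k) (Fin k) F}
    (hA : A.det ≠ 0) {j : ℕ} {W : Submodule F V} (h : HasType b A j W) :
    Module.finrank F W = j + k := by
  obtain ⟨f, D, hf, rfl, hD, rfl⟩ := h
  have hinj : Function.Injective f := by
    rw [← LinearMap.ker_eq_bot, LinearMap.ker_eq_bot']
    intro x hx
    exact eq_zero_of_dot hA fun y => by rw [← hf, hx]; simp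
  have hdis : D ⊓ LinearMap.range f = ⊥ := by
    rw [eq_bot_iff]
    rintro _ ⟨hd, x, rfl⟩
    have : x = 0 := eq_zero_of_dot hA fun y => by
      rw [← hf]
      exact (hD _ hd _ (Submodule.mem_sup_right ⟨y, rfl⟩)).1
    simp [this]
  have := Submodule.finrank_sup_add_finrank_inf_eq D (LinearMap.range f)
  rw [hdis, finrank_bot, LinearMap.finrank_range_of_inj hinj] at this
  simpa using this

theorem finrank_map_add (π : V →ₗ[F] U) [FiniteDimensional F V] (D : Submodule F V) :
    Module.finrank F (D.map π) + Module.finrank F ↥(D ⊓ LinearMap.ker π) = Module.finrank F D := by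
  rw [← LinearMap.finrank_range_add_finrank_ker (π.domRestrict D), LinearMap.range_domRestrict,
    LinearMap.ker_domRestrict, ← Submodule.map_comap_subtype, Submodule.finrank_map_subtype_eq]

/-- If the form on `V` is pulled back along `π`, the type of `W` is determined by the dimension
of `W ∩ ker π` and the type of `π W`. -/
theorem hasType_iff_map [FiniteDimensional F V] {π : V →ₗ[F] U} {b : LinearMap.BilinForm F V}
    {b' : LinearMap.BilinForm F U} (hb : ∀ v w, b v w = b' (π v) (π w))
    {A : Matrix (Fin k) (Fin k) F} (hA : A.det ≠ 0) {j : ℕ} {W : Submodule F V} :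
    HasType b A j W ↔ Module.finrank F ↥(W ⊓ LinearMap.ker π) ≤ j ∧
      HasType b' A (j - Module.finrank F ↥(W ⊓ LinearMap.ker π)) (W.map π) := by
  constructor
  · rintro ⟨f, D, hf, rfl, hD, rfl⟩
    have hker : (D ⊔ LinearMap.range f) ⊓ LinearMap.ker π = D ⊓ LinearMap.ker π := by
      apply le_antisymm
      · rintro v ⟨hv, hv'⟩
        refine ⟨?_, hv'⟩
        obtain ⟨d, hd, _, ⟨x, rfl⟩, rfl⟩ := Submodule.mem_sup.1 hv
        have : x = 0 := eq_zero_of_dot hA fun y => by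
          have h1 := hb (d + f x) (f y)
          rw [LinearMap.mem_ker.1 hv', map_add, LinearMap.add_apply, hf,
            (hD d hd _ (Submodule.mem_sup_right ⟨y, rfl⟩)).1] at h1
          simpa using h1
        simpa [this] using hd
      · exact inf_le_inf_right _ le_sup_left
    have hr := finrank_map_add π D
    rw [hker]
    refine ⟨by omega, π ∘ₗ f, D.map π, ?_, by omega, ?_, ?_⟩
    · intro x y
      rw [LinearMap.comp_apply, LinearMap.comp_apply, ← hb, hf]
    · rintro _ ⟨d, hd, rfl⟩ _ ⟨w, hw, rfl⟩
      rw [← hb, ← hb]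
      exact hD d hd w hw
    · rw [Submodule.map_sup, LinearMap.range_comp]
  · rintro ⟨hj, f', D', hf', hr, hD', hW⟩
    have hr' : ∀ x, f' x ∈ W.map π := fun x => hW ▸ Submodule.mem_sup_right ⟨x, rfl⟩
    obtain ⟨h, hh⟩ := Module.projective_lifting_property (π.submoduleMap W)
      (f'.codRestrict (W.map π) hr') (π.submoduleMap_surjective W)
    have hπ : ∀ x, π (h x : V) = f' x := fun x =>
      congrArg Subtype.val (LinearMap.congr_fun hh x)
    have hDW : D' ≤ W.map π := hW ▸ le_sup_left
    have hm : (W ⊓ D'.comap π).map π = D' := by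
      apply le_antisymm
      · rintro _ ⟨v, hv, rfl⟩
        exact hv.2
      · intro d hd
        obtain ⟨w, hw, rfl⟩ := hDW hd
        exact ⟨w, ⟨hw, hd⟩, rfl⟩
    have hk : (W ⊓ D'.comap π) ⊓ LinearMap.ker π = W ⊓ LinearMap.ker π := by
      apply le_antisymm
      · exact inf_le_inf_right _ inf_le_left
      · rintro v ⟨hv, hv'⟩
        refine ⟨⟨hv, ?_⟩, hv'⟩
        rw [SetLike.mem_coe, Submodule.mem_comap, LinearMap.mem_ker.1 hv']
        exact D'.zero_mem
    have hfr := finrank_map_add π (W ⊓ D'.comap π)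
    rw [hm, hk, hr] at hfr
    refine ⟨W.subtype ∘ₗ h, W ⊓ D'.comap π, ?_, by omega, ?_, ?_⟩
    · intro x y
      simp only [LinearMap.comp_apply, Submodule.subtype_apply]
      rw [hb, hπ, hπ, hf']
    · rintro d ⟨-, hd⟩ w hw
      rw [hb, hb]
      exact hD' _ hd _ ⟨w, hw, rfl⟩
    · apply le_antisymm
      · refine sup_le inf_le_left ?_
        rintro _ ⟨x, rfl⟩
        exact (h x).2
      · intro w hw
        have hw' : π w ∈ D' ⊔ LinearMap.range f' := hW ▸ ⟨w, hw, rfl⟩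
        obtain ⟨d, hd, _, ⟨x, rfl⟩, hdx⟩ := Submodule.mem_sup.1 hw'
        refine Submodule.mem_sup.2 ⟨w - h x, ⟨W.sub_mem hw (h x).2, ?_⟩, h x, ⟨x, rfl⟩, by abel⟩
        rw [SetLike.mem_coe, Submodule.mem_comap, map_sub, hπ, ← hdx, add_sub_cancel_right]
        exact hd

theorem dot_padGram {m : ℕ} (t : ℕ) (C : Matrix (Fin m) (Fin m) F) (x y : Fin t ⊕ Fin m → F) :
    x ⬝ᵥ (padGram t C).mulVec y = (x ∘ Sum.inr) ⬝ᵥ C.mulVec (y ∘ Sum.inr) := by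
  rw [padGram, Matrix.fromBlocks_mulVec]
  simp [dotProduct, Fintype.sum_sum_type]

theorem exists_emb_iff_hasType {κ : Type} [Fintype κ] [DecidableEq κ] (B : Matrix κ κ F)
    {A : Matrix (Fin k) (Fin k) F} (hA : A.det ≠ 0) (j : ℕ) (W : Submodule F (κ → F)) :
    (∃ φ : ((Fin j ⊕ Fin k) → F) →ₗ[F] (κ → F),
        IsIsomEmb (padGram j A) B φ ∧ LinearMap.range φ = W) ↔
      HasType (Matrix.toBilin' B) A j W := by
  set b := Matrix.toBilin' B with hbdef
  have hb : ∀ v w, b v w = v ⬝ᵥ B.mulVec w := fun v w => Matrix.toBilin'_apply' B v w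
  let E := LinearEquiv.sumArrowLequivProdArrow (Fin j) (Fin k) F F
  constructor
  · rintro ⟨φ, ⟨hφ, hiso⟩, rfl⟩
    have hl : Function.Injective (φ ∘ₗ E.symm.toLinearMap ∘ₗ LinearMap.inl F _ _) :=
      hφ.comp (E.symm.injective.comp LinearMap.inl_injective)
    refine ⟨φ ∘ₗ E.symm.toLinearMap ∘ₗ LinearMap.inr F _ _,
      LinearMap.range (φ ∘ₗ E.symm.toLinearMap ∘ₗ LinearMap.inl F _ _), ?_, ?_, ?_, ?_⟩
    · intro x y
      simp only [LinearMap.comp_apply]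
      rw [hb, hiso, dot_padGram]
      rfl
    · rw [LinearMap.finrank_range_of_inj hl, Module.finrank_fin_fun]
    · rintro _ ⟨x, rfl⟩ _ ⟨y, rfl⟩
      simp only [LinearMap.comp_apply]
      rw [hb, hb, hiso, hiso, dot_padGram, dot_padGram]
      have : (E.symm (LinearMap.inl F _ _ x)) ∘ Sum.inr = (0 : Fin k → F) := rfl
      simp only [LinearEquiv.coe_coe]
      rw [this]
      simp
    · rw [LinearMap.range_comp, LinearMap.range_comp, LinearMap.range_comp, LinearMap.range_comp,
        ← Submodule.map_sup, ← Submodule.map_sup, LinearMap.sup_range_inl_inr,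
        Submodule.map_top, LinearEquiv.range, Submodule.map_top]
  · rintro ⟨f, D, hf, hr, hD, hW⟩
    let e := LinearEquiv.ofFinrankEq (Fin j → F) D (by rw [Module.finrank_fin_fun, hr])
    let φ : ((Fin j ⊕ Fin k) → F) →ₗ[F] (κ → F) :=
      (D.subtype ∘ₗ e.toLinearMap).coprod f ∘ₗ E.toLinearMap
    have hφ : ∀ x, φ x = (e (x ∘ Sum.inl) : κ → F) + f (x ∘ Sum.inr) := fun x => rfl
    have hrange : LinearMap.range φ = W := by
      rw [LinearMap.range_comp_of_range_eq_top _ (LinearEquiv.range E), LinearMap.range_coprod,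
        LinearMap.range_comp_of_range_eq_top _ (LinearEquiv.range e), Submodule.range_subtype, hW]
    have hiso : ∀ x y, b (φ x) (φ y) = x ⬝ᵥ (padGram j A).mulVec y := by
      intro x y
      have hy : φ y ∈ W := hrange ▸ ⟨y, rfl⟩
      have hfx : f (x ∘ Sum.inr) ∈ W := hW ▸ Submodule.mem_sup_right ⟨_, rfl⟩
      rw [hφ x, map_add, LinearMap.add_apply, (hD _ (e (x ∘ Sum.inl)).2 _ hy).1, hφ y, map_add,
        (hD _ (e (y ∘ Sum.inl)).2 _ hfx).2, hf, dot_padGram, zero_add, zero_add]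
    refine ⟨φ, ⟨?_, fun x y => by rw [← hb, hiso]⟩, hrange⟩
    rw [← LinearMap.ker_eq_bot, LinearMap.ker_eq_bot']
    intro x hx
    have h1 : x ∘ Sum.inr = 0 := eq_zero_of_dot hA fun y => by
      have h := hiso x (Sum.elim 0 y)
      rw [hx, dot_padGram, Sum.elim_comp_inr] at h
      rw [← h]
      simp
    have h2 : x ∘ Sum.inl = 0 := by
      rw [hφ, h1, map_zero, add_zero] at hx
      simpa using hx
    funext i
    rcases i with i | i
    · exact congrFun h2 i
    · exact congrFun h1 i

end Types

theorem subCount_eq {F : Type} [Field F] {κ : Type} [Fintype κ] [DecidableEq κ] (B : Matrix κ κ F) (j k : ℕ)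
    (ε : ℤ) : subCount B j k ε = Nat.card {W : Submodule F (κ → F) //
      ∃ A : Matrix (Fin k) (Fin k) F, IsGram F k ε A ∧ HasType (Matrix.toBilin' B) A j W} := by
  rw [subCount]
  refine Nat.card_congr (Equiv.subtypeEquivRight fun W => exists_congr fun A => ?_)
  exact and_congr_right fun hA => exists_emb_iff_hasType B hA.2.1 j W

/-- for `j, k ≥ 0`, `0 ≤ t ≤ n` and signs `ε₁, ε₂`:
`m(0_j ⊥ U_k^{ε₂}, 0_t ⊥ U_{n−t}^{ε₁}) =
Σ_{ℓ=0}^{min(t,j)} binom(t,ℓ)_q · q^{(t−ℓ)(j+k−ℓ)} · m(0_{j−ℓ} ⊥ U_k^{ε₂}, U_{n−t}^{ε₁})`. -/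
theorem statement2 (F : Type) [Field F] [Fintype F] (q : ℕ)
    (hq : Fintype.card F = q) (hodd : Odd q)
    (j k t n : ℕ) (ht : t ≤ n) (ε₁ ε₂ : ℤ) (hε₁ : ε₁ = 1 ∨ ε₁ = -1) (hε₂ : ε₂ = 1 ∨ ε₂ = -1)
    (C : Matrix (Fin (n - t)) (Fin (n - t)) F) (hC : IsGram F (n - t) ε₁ C) :
    (subCount (padGram t C) j k ε₂ : ℚ) =
      ∑ ℓ ∈ Finset.range (min t j + 1),
        qbinom (q : ℚ) t ℓ * (q : ℚ) ^ ((t - ℓ) * (j + k - ℓ)) *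
          (subCount C (j - ℓ) k ε₂ : ℚ) := by
  subst hq
  let V := Fin t ⊕ Fin (n - t) → F
  let p : V →ₗ[F] (Fin t → F) := LinearMap.funLeft F F Sum.inl
  let π : V →ₗ[F] (Fin (n - t) → F) := LinearMap.funLeft F F Sum.inr
  have hi : ∀ v, p v = 0 → π v = 0 → v = 0 := by
    intro v h1 h2
    funext i
    rcases i with i | i
    · exact congrFun h1 i
    · exact congrFun h2 i
  have hs : ∀ r u, ∃ v, p v = r ∧ π v = u := fun r u => ⟨Sum.elim r u, rfl, rfl⟩
  have hb : ∀ v w, Matrix.toBilin' (padGram t C) v w = Matrix.toBilin' C (π v) (π w) := by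
    intro v w
    rw [Matrix.toBilin'_apply', Matrix.toBilin'_apply', dot_padGram]
    rfl
  let T : ℕ → Submodule F (Fin (n - t) → F) → Prop := fun i W =>
    ∃ A : Matrix (Fin k) (Fin k) F, IsGram F k ε₂ A ∧ HasType (Matrix.toBilin' C) A i W
  let r : Submodule F V → ℕ := fun W => Module.finrank F ↥(W ⊓ LinearMap.ker π)
  have hS : ∀ W : Submodule F V,
      (∃ A : Matrix (Fin k) (Fin k) F, IsGram F k ε₂ A ∧
        HasType (Matrix.toBilin' (padGram t C)) A j W) ↔ r W ≤ j ∧ T (j - r W) (W.map π) := by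
    intro W
    constructor
    · rintro ⟨A, hA, h⟩
      obtain ⟨h1, h2⟩ := (hasType_iff_map hb hA.2.1).1 h
      exact ⟨h1, A, hA, h2⟩
    · rintro ⟨h1, A, hA, h2⟩
      exact ⟨A, hA, (hasType_iff_map hb hA.2.1).2 ⟨h1, h2⟩⟩
  have hrt : ∀ W, r W ≤ t := by
    intro W
    have h := Submodule.finrank_le ((W ⊓ LinearMap.ker π).map p)
    rwa [finrank_map_p hi, Module.finrank_fin_fun] at h
  rw [subCount_eq, Nat.card_congr (Equiv.subtypeEquivRight hS)]
  have := Fintype.ofFinite (Submodule F V)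
  rw [Nat.card_eq_fintype_card, Fintype.card_subtype,
    Finset.card_eq_sum_card_fiberwise (f := r) (t := Finset.range (min t j + 1)), Nat.cast_sum]
  · refine Finset.sum_congr rfl fun ℓ hℓ => ?_
    have hℓ : ℓ ≤ min t j := by have := Finset.mem_range.1 hℓ; omega
    have hℓt : ℓ ≤ t := hℓ.trans (min_le_left _ _)
    have hℓj : ℓ ≤ j := hℓ.trans (min_le_right _ _)
    have hcf := card_fiber hi hs (T (j - ℓ)) ℓ (j - ℓ + k)
      (fun W ⟨A, hA, h⟩ => h.finrank_eq hA.2.1)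
    have hg := card_grass (F := F) (M := Fin t → F) ℓ (by rwa [Module.finrank_fin_fun])
    rw [Module.finrank_fin_fun] at hcf hg
    have he : (Finset.univ.filter (fun W => r W ≤ j ∧ T (j - r W) (W.map π))).filter
        (fun W => r W = ℓ) = Finset.univ.filter (fun W => r W = ℓ ∧ T (j - ℓ) (W.map π)) := by
      ext W
      simp only [Finset.mem_filter, Finset.mem_univ, true_and]
      constructor
      · rintro ⟨⟨-, h⟩, rfl⟩
        exact ⟨rfl, h⟩
      · rintro ⟨rfl, h⟩
        exact ⟨⟨hℓj, h⟩, rfl⟩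
    rw [he, ← Fintype.card_subtype, ← Nat.card_eq_fintype_card, hcf, subCount_eq]
    push_cast
    rw [hg, show j + k - ℓ = j - ℓ + k by omega, mul_comm (t - ℓ)]
    ring
  · intro W hW
    have hW := (Finset.mem_filter.1 hW).2
    exact Finset.mem_range.2 (Nat.lt_succ_of_le (le_min (hrt W) hW.1))
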